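/- arXiv:2504.09579 — 7 statements merged into one kernel-verified Lean document; each statement's English description precedes it below -/
import Mathlib

section
/- Let n > 1 be a nice positive integer and let p be the smallest prime divisor of n. Then n/p has fewer than p distinct prime factors, i.e., ω(n/p) < p. -/
/-- A congruence is a pair `(a, d)` representing `a (mod d)`, with residue `a : ℤ`
and modulus `d : ℕ`. Two congruences overlap if some integer satisfies both. -/
def Overlap (c₁ c₂ : ℤ × ℕ) : Prop :=
  ∃ x : ℤ, x ≡ c₁.1 [ZMOD (c₁.2 : ℤ)] ∧ x ≡ c₂.1 [ZMOD (c₂.2 : ℤ)]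

/-- A set of congruences is good if any two distinct overlapping congruences in it
have coprime moduli. -/
def IsGood (A : Set (ℤ × ℕ)) : Prop :=
  ∀ c₁ ∈ A, ∀ c₂ ∈ A, c₁ ≠ c₂ → Overlap c₁ c₂ → Nat.Coprime c₁.2 c₂.2

/-- A positive integer `n` is nice if there is a choice of residues `a d` for each
divisor `d > 1` of `n` such that `{a_d (mod d) : d ∣ n, d > 1}` is good. -/
def IsNice (n : ℕ) : Prop :=
  ∃ a : ℕ → ℤ, IsGood {c : ℤ × ℕ | ∃ d : ℕ, d ∣ n ∧ 1 < d ∧ c = (a d, d)}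

/-!
If `d > 1` divides `n`, the moduli `d * q`, with `q` equal to `1` or to a prime factor of `n / d`,
have pairwise gcd exactly `d`. Since `d ≠ 1`, their congruences cannot overlap in a good set, so by
the Chinese remainder theorem their residues are pairwise distinct modulo `d`. There are
`ω(n / d) + 1` of them, and only `d` residues.
-/

theorem overlap_iff_modEq_gcd {a b : ℤ} {d e : ℕ} :
    Overlap (a, d) (b, e) ↔ a ≡ b [ZMOD (d.gcd e : ℕ)] := by
  constructor
  · rintro ⟨x, hxa, hxb⟩
    exact (hxa.of_dvd (mod_cast d.gcd_dvd_left e)).symm.trans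
      (hxb.of_dvd (mod_cast d.gcd_dvd_right e))
  · intro hab
    obtain ⟨t, ht⟩ := hab.dvd
    have bezout := Nat.gcd_eq_gcd_ab d e
    refine ⟨a + d * (d.gcdA e * t), ?_, ?_⟩
    · exact Int.modEq_iff_dvd.2 ⟨-(d.gcdA e * t), by ring⟩
    · exact Int.modEq_iff_dvd.2 ⟨d.gcdB e * t, by linear_combination ht + t * bezout⟩

theorem IsGood.card_le_of_pairwise_gcd_eq {A : Set (ℤ × ℕ)} (hA : IsGood A) {d : ℕ} (hd : 1 < d)
    {S : Finset (ℤ × ℕ)} (hSA : ∀ c ∈ S, c ∈ A)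
    (hgcd : (S : Set (ℤ × ℕ)).Pairwise fun c₁ c₂ ↦ c₁.2.gcd c₂.2 = d) : S.card ≤ d := by
  have : NeZero d := ⟨by omega⟩
  by_contra! hcard
  obtain ⟨c₁, h₁, c₂, h₂, hne, hres⟩ : ∃ c₁ ∈ S, ∃ c₂ ∈ S, c₁ ≠ c₂ ∧ (c₁.1 : ZMod d) = c₂.1 :=
    Finset.exists_ne_map_eq_of_card_lt_of_maps_to (t := .univ) (by simpa using hcard) (by simp)
  have hgcd₁₂ : c₁.2.gcd c₂.2 = d := hgcd h₁ h₂ hne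
  have hoverlap : Overlap c₁ c₂ := by
    rw [overlap_iff_modEq_gcd, hgcd₁₂]
    exact (ZMod.intCast_eq_intCast_iff _ _ _).1 hres
  have hcoprime : c₁.2.gcd c₂.2 = 1 := hA c₁ (hSA c₁ h₁) c₂ (hSA c₂ h₂) hne hoverlap
  omega

theorem IsNice.card_le_of_pairwise_coprime {n d : ℕ} (h : IsNice n) (hd : 1 < d) {Q : Finset ℕ}
    (hQ : ∀ q ∈ Q, 0 < q ∧ d * q ∣ n) (hcoprime : (Q : Set ℕ).Pairwise Nat.Coprime) :
    Q.card ≤ d := by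
  obtain ⟨a, ha⟩ := h
  let c : ℕ → ℤ × ℕ := fun q ↦ (a (d * q), d * q)
  have hc : c.Injective := fun q r hqr ↦
    Nat.eq_of_mul_eq_mul_left (by omega) (congrArg Prod.snd hqr)
  rw [← Finset.card_image_of_injective Q hc]
  refine ha.card_le_of_pairwise_gcd_eq hd (Finset.forall_mem_image.2 fun q hq ↦ ?_) ?_
  · obtain ⟨hq_pos, hdvd⟩ := hQ q hq
    exact ⟨d * q, hdvd, Nat.one_lt_mul_iff.2 (by omega), rfl⟩
  · rw [Finset.coe_image, hc.injOn.pairwise_image]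
    intro q hq r hr hqr
    have hgcd : q.gcd r = 1 := hcoprime hq hr hqr
    simp [Function.onFun, c, Nat.gcd_mul_left, hgcd]

theorem pairwise_coprime_insert_one_primeFactors (m : ℕ) :
    (insert 1 m.primeFactors : Set ℕ).Pairwise Nat.Coprime := by
  rw [Set.pairwise_insert_of_symm]
  refine ⟨fun p hp q hq hpq ↦ ?_, fun q _ _ ↦ Nat.coprime_one_left q⟩
  exact (Nat.coprime_primes (Nat.prime_of_mem_primeFactors hp)
    (Nat.prime_of_mem_primeFactors hq)).2 hpq

theorem nice_necessary_general {n d : ℕ} (h : IsNice n) (hdn : d ∣ n) (hd : 1 < d) :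
    (n / d).primeFactors.card < d := by
  let Q := insert 1 (n / d).primeFactors
  have hQ_dvd : ∀ q ∈ Q, 0 < q ∧ d * q ∣ n := by
    refine Finset.forall_mem_insert _ _ _ |>.2 ⟨by simpa using hdn, fun q hq ↦ ?_⟩
    exact ⟨Nat.pos_of_mem_primeFactors hq,
      Nat.mul_dvd_of_dvd_div hdn (Nat.dvd_of_mem_primeFactors hq)⟩
  have hQ_coprime : (Q : Set ℕ).Pairwise Nat.Coprime := by
    rw [Finset.coe_insert]
    exact pairwise_coprime_insert_one_primeFactors (n / d)
  calc (n / d).primeFactors.card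
    _ < Q.card := Finset.card_lt_card (Finset.ssubset_insert (by simp [Nat.not_prime_one]))
    _ ≤ d := h.card_le_of_pairwise_coprime hd hQ_dvd hQ_coprime

theorem nice_necessary (n : ℕ) (hn : 1 < n) (h : IsNice n) :
    (n / n.minFac).primeFactors.card < n.minFac :=
  nice_necessary_general h n.minFac_dvd (Nat.minFac_prime hn.ne').one_lt
end

section
/- Let n > 1 be a positive integer and let p be the smallest prime divisor of n. If n/p has fewer than p distinct prime factors (i.e., ω(n/p) < p), then n is nice. -/
/-!
Write `r = ω(n)`. The hypothesis says that `r ≤ q` for every prime `q ∣ n`, and `r < q` whenever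
`q ^ 2 ∣ n`. Give every nonempty set `S` of prime divisors of `n` a cyclic order, number the prime
divisors of `n` by `1, …, r`, and for `q ^ e` exactly dividing `d` require
`a_d ≡ q ^ (e - 1) * c (mod q ^ e)`, where `c` is the number of the successor of `q` in the cyclic
order on the prime divisors of `d`. If the congruences of `d` and `d'` overlap, then at a common
prime factor `q` the two exponents and the two successors coincide. Hence, once `d` and `d'` have a
common prime factor, following successors from it shows that they have the same prime factors, and
so `d = d'`.
-/

theorem Overlap.modEq_of_dvd {a a' : ℤ} {d d' m : ℕ} (h : Overlap (a, d) (a', d'))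
    (hd : m ∣ d) (hd' : m ∣ d') : a ≡ a' [ZMOD m] := by
  obtain ⟨x, hx, hx'⟩ := h
  exact (hx.of_dvd (Int.natCast_dvd_natCast.2 hd)).symm.trans
    (hx'.of_dvd (Int.natCast_dvd_natCast.2 hd'))

section CyclicOrders

variable {α : Type*}

theorem subset_of_isCycleOn_of_forall_mem {f : Equiv.Perm α} {S : Finset α} {T : Set α}
    (hf : f.IsCycleOn S) (hmaps : ∀ y ∈ S, y ∈ T → f y ∈ T) {x : α} (hxS : x ∈ S) (hxT : x ∈ T) :
    ↑S ⊆ T := by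
  intro y hy
  obtain ⟨m, -, rfl⟩ := hf.exists_pow_eq hxS hy
  have hinter : Set.MapsTo f (S ∩ T) (S ∩ T) := fun z hz =>
    ⟨hf.1.mapsTo hz.1, hmaps z hz.1 hz.2⟩
  rw [← Equiv.Perm.iterate_eq_pow]
  exact (hinter.iterate m ⟨hxS, hxT⟩).2

theorem eq_of_isCycleOn_of_forall_apply_eq {f g : Equiv.Perm α} {S T : Finset α}
    (hf : f.IsCycleOn S) (hg : g.IsCycleOn T) (hfg : ∀ x ∈ S, x ∈ T → f x = g x)
    {x : α} (hxS : x ∈ S) (hxT : x ∈ T) : S = T := by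
  apply Finset.Subset.antisymm
  · exact subset_of_isCycleOn_of_forall_mem hf
      (fun y hyS hyT => hfg y hyS hyT ▸ hg.1.mapsTo hyT) hxS hxT
  · exact subset_of_isCycleOn_of_forall_mem hg
      (fun y hyT hyS => hfg y hyS hyT ▸ hf.1.mapsTo hyS) hxT hxS

/-- A labelling `c` of the members of the subsets of `P` is *separating* if it tells any two
intersecting subsets apart already on their intersection. -/
def IsSeparatingLabelling (P : Finset α) (c : Finset α → α → ℕ) : Prop :=
  ∀ S ⊆ P, ∀ T ⊆ P, (∃ x ∈ S, x ∈ T) → (∀ x ∈ S, x ∈ T → c S x = c T x) → S = T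

theorem exists_isSeparatingLabelling (P : Finset α) :
    ∃ c : Finset α → α → ℕ,
      (∀ S ⊆ P, ∀ x ∈ S, c S x ∈ Set.Icc 1 P.card) ∧ IsSeparatingLabelling P c := by
  obtain ⟨index, hmem, hinj⟩ : ∃ index : α → ℕ,
      (P : Set α) ⊆ index ⁻¹' Set.Icc 1 P.card ∧ Set.InjOn index P :=
    P.finite_toSet.exists_injOn_of_encard_le (by simp [← Finset.coe_Icc])
  choose succ hsucc _ using fun S : Finset α => S.countable_toSet.exists_cycleOn
  have succ_mem {S : Finset α} {x : α} (hx : x ∈ S) : succ S x ∈ S := (hsucc S).1.mapsTo hx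
  refine ⟨fun S x => index (succ S x), fun S hS x hx => hmem (hS (succ_mem hx)), ?_⟩
  rintro S hS T hT ⟨x, hxS, hxT⟩ hST
  exact eq_of_isCycleOn_of_forall_apply_eq (hsucc S) (hsucc T)
    (fun y hyS hyT => hinj (hS (succ_mem hyS)) (hT (succ_mem hyT)) (hST y hyS hyT)) hxS hxT

end CyclicOrders

section TopDigits

theorem not_pow_mul_modEq_pow_mul_of_lt {q k l c c' : ℕ} (hq : q ≠ 0) (hkl : k < l)
    (hc : ¬ q ∣ c) : ¬ q ^ k * c ≡ q ^ l * c' [MOD q ^ (k + 1)] := by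
  intro h
  have hdvd : q ^ k * q ∣ q ^ k * c := by
    rw [← pow_succ]
    exact (h.dvd_iff dvd_rfl).2 (Dvd.dvd.mul_right (pow_dvd_pow q hkl) c')
  exact hc (Nat.dvd_of_mul_dvd_mul_left (pow_pos (Nat.pos_of_ne_zero hq) k) hdvd)

theorem eq_and_eq_of_pow_mul_modEq_pow_mul {q k l c c' : ℕ} (hc : c ∈ Set.Icc 1 q)
    (hc' : c' ∈ Set.Icc 1 q) (hlt : k ≠ l → c < q ∧ c' < q)
    (h : q ^ k * c ≡ q ^ l * c' [MOD q ^ (min k l + 1)]) : k = l ∧ c = c' := by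
  obtain ⟨hc, hcq⟩ := hc
  obtain ⟨hc', hcq'⟩ := hc'
  have hq : q ≠ 0 := by omega
  rcases lt_trichotomy k l with hkl | rfl | hkl
  · rw [min_eq_left hkl.le] at h
    exact absurd h (not_pow_mul_modEq_pow_mul_of_lt hq hkl
      (Nat.not_dvd_of_pos_of_lt hc (hlt hkl.ne).1))
  · rw [min_self, pow_succ] at h
    have hmod : c ≡ c' [MOD q] := Nat.ModEq.mul_left_cancel' (pow_ne_zero k hq) h
    exact ⟨rfl, hmod.eq_of_abs_lt (by rw [abs_lt]; omega)⟩
  · rw [min_eq_right hkl.le] at h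
    exact absurd h.symm (not_pow_mul_modEq_pow_mul_of_lt hq hkl
      (Nat.not_dvd_of_pos_of_lt hc' (hlt hkl.ne').2))

/-- For every prime power `q ^ e` exactly dividing `d`, with `e ≥ 1`, the residue of `a` modulo
`q ^ e` is `q ^ (e - 1) * c q`: in base `q`, only the top digit `c q` may be nonzero. The value
`c q = q` is allowed and encodes the digit `0`. -/
def HasTopDigits (d : ℕ) (c : ℕ → ℕ) (a : ℕ) : Prop :=
  ∀ q ∈ d.primeFactors, a ≡ q ^ (d.factorization q - 1) * c q [MOD q ^ d.factorization q]

theorem exists_hasTopDigits (d : ℕ) (c : ℕ → ℕ) : ∃ a, HasTopDigits d c a := by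
  have hne : ∀ q ∈ d.primeFactors, q ^ d.factorization q ≠ 0 := fun q hq =>
    pow_ne_zero _ (Nat.prime_of_mem_primeFactors hq).ne_zero
  have hcop : Set.Pairwise d.primeFactors
      (Function.onFun Nat.Coprime fun q => q ^ d.factorization q) := fun q hq q' hq' hqq' =>
    Nat.coprime_pow_primes _ _ (Nat.prime_of_mem_primeFactors hq)
      (Nat.prime_of_mem_primeFactors hq') hqq'
  obtain ⟨a, ha⟩ := Nat.chineseRemainderOfFinset _ _ d.primeFactors hne hcop
  exact ⟨a, ha⟩

theorem HasTopDigits.factorization_eq_and_eq {d d' a a' q : ℕ} {c c' : ℕ → ℕ}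
    (ha : HasTopDigits d c a) (ha' : HasTopDigits d' c' a') (h : Overlap (a, d) (a', d'))
    (hq : q ∈ d.primeFactors) (hq' : q ∈ d'.primeFactors)
    (hc : c q ∈ Set.Icc 1 q) (hc' : c' q ∈ Set.Icc 1 q)
    (hlt : d.factorization q ≠ d'.factorization q → c q < q ∧ c' q < q) :
    d.factorization q = d'.factorization q ∧ c q = c' q := by
  set e := d.factorization q
  set e' := d'.factorization q
  have epos : e ≠ 0 := Finsupp.mem_support_iff.1 hq
  have epos' : e' ≠ 0 := Finsupp.mem_support_iff.1 hq'
  have hdvd : q ^ min e e' ∣ q ^ e := pow_dvd_pow q (min_le_left e e')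
  have hdvd' : q ^ min e e' ∣ q ^ e' := pow_dvd_pow q (min_le_right e e')
  have hmod : a ≡ a' [MOD q ^ min e e'] := Int.natCast_modEq_iff.1
    (h.modEq_of_dvd (hdvd.trans (Nat.ordProj_dvd d q)) (hdvd'.trans (Nat.ordProj_dvd d' q)))
  have htop : q ^ (e - 1) * c q ≡ q ^ (e' - 1) * c' q [MOD q ^ min e e'] :=
    ((ha q hq).of_dvd hdvd).symm.trans (hmod.trans ((ha' q hq').of_dvd hdvd'))
  rw [show min e e' = min (e - 1) (e' - 1) + 1 by omega] at htop
  have := eq_and_eq_of_pow_mul_modEq_pow_mul hc hc' (fun hne => hlt (by omega)) htop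
  exact ⟨by omega, this.2⟩

end TopDigits

section Divisors

theorem sq_dvd_of_factorization_ne {n d d' q : ℕ} (hd : d ∣ n) (hd' : d' ∣ n)
    (hq : q ∈ d.primeFactors) (hq' : q ∈ d'.primeFactors)
    (hne : d.factorization q ≠ d'.factorization q) : q ^ 2 ∣ n := by
  have epos : d.factorization q ≠ 0 := Finsupp.mem_support_iff.1 hq
  have epos' : d'.factorization q ≠ 0 := Finsupp.mem_support_iff.1 hq'
  rcases lt_or_gt_of_ne hne with hlt | hlt
  · exact ((pow_dvd_pow q (by omega)).trans (Nat.ordProj_dvd d' q)).trans hd'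
  · exact ((pow_dvd_pow q (by omega)).trans (Nat.ordProj_dvd d q)).trans hd

theorem primeFactors_eq_insert_primeFactors_div {n p : ℕ} (hn : n ≠ 0) (hp : p.Prime)
    (hpn : p ∣ n) : n.primeFactors = insert p (n / p).primeFactors := by
  obtain ⟨m, rfl⟩ := hpn
  rw [Nat.mul_div_cancel_left m hp.pos, Nat.primeFactors_mul hp.ne_zero (right_ne_zero_of_mul hn),
    hp.primeFactors, Finset.insert_eq]

theorem primeFactors_div_eq_of_sq_dvd {n p : ℕ} (hn : n ≠ 0) (hp : p.Prime) (hpn : p ^ 2 ∣ n) :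
    (n / p).primeFactors = n.primeFactors := by
  have hdvd : p ∣ n := (dvd_pow_self p two_ne_zero).trans hpn
  have hmem : p ∈ (n / p).primeFactors :=
    Nat.mem_primeFactors.2 ⟨hp, (Nat.dvd_div_iff_mul_dvd hdvd).2 (sq p ▸ hpn),
      (Nat.div_pos (Nat.le_of_dvd (Nat.pos_of_ne_zero hn) hdvd) hp.pos).ne'⟩
  rw [primeFactors_eq_insert_primeFactors_div hn hp hdvd, Finset.insert_eq_of_mem hmem]

end Divisors

theorem isNice_of_card_primeFactors_le {n : ℕ} (hn : n ≠ 0)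
    (hle : ∀ q ∈ n.primeFactors, n.primeFactors.card ≤ q)
    (hlt : ∀ q ∈ n.primeFactors, q ^ 2 ∣ n → n.primeFactors.card < q) : IsNice n := by
  obtain ⟨c, hc, hsep⟩ := exists_isSeparatingLabelling n.primeFactors
  choose a ha using fun d => exists_hasTopDigits d (c d.primeFactors)
  refine ⟨fun d => a d, ?_⟩
  rintro _ ⟨d, hd, -, rfl⟩ _ ⟨d', hd', -, rfl⟩ hne hoverlap
  contrapose! hne with hcop
  have hS := Nat.primeFactors_mono hd hn
  have hS' := Nat.primeFactors_mono hd' hn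
  have hagree : ∀ q ∈ d.primeFactors, q ∈ d'.primeFactors →
      d.factorization q = d'.factorization q ∧ c d.primeFactors q = c d'.primeFactors q := by
    intro q hq hq'
    obtain ⟨hc₁, hcr⟩ := hc _ hS q hq
    obtain ⟨hc₁', hcr'⟩ := hc _ hS' q hq'
    have hrq := hle q (hS hq)
    refine (ha d).factorization_eq_and_eq (ha d') hoverlap hq hq' ⟨hc₁, hcr.trans hrq⟩
      ⟨hc₁', hcr'.trans hrq⟩ fun hexp => ?_
    have hrq_lt := hlt q (hS hq) (sq_dvd_of_factorization_ne hd hd' hq hq' hexp)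
    exact ⟨hcr.trans_lt hrq_lt, hcr'.trans_lt hrq_lt⟩
  have hd0 := ne_zero_of_dvd_ne_zero hn hd
  have hd0' := ne_zero_of_dvd_ne_zero hn hd'
  have hcommon : ∃ q ∈ d.primeFactors, q ∈ d'.primeFactors := by
    obtain ⟨q, hq, hqd, hqd'⟩ := Nat.Prime.not_coprime_iff_dvd.1 hcop
    exact ⟨q, hq.mem_primeFactors hqd hd0, hq.mem_primeFactors hqd' hd0'⟩
  have hprimes : d.primeFactors = d'.primeFactors :=
    hsep _ hS _ hS' hcommon fun q hq hq' => (hagree q hq hq').2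
  have hdd' : d = d' := Nat.factorization_inj hd0 hd0'
    (Finsupp.ext_iff'.2 ⟨hprimes, fun q hq => (hagree q hq (hprimes ▸ hq)).1⟩)
  rw [hdd']

theorem nice_sufficient (n : ℕ) (hn : 1 < n)
    (h : (n / n.minFac).primeFactors.card < n.minFac) : IsNice n := by
  have hn0 : n ≠ 0 := by omega
  have hp : n.minFac.Prime := Nat.minFac_prime hn.ne'
  have hcard : n.primeFactors.card ≤ n.minFac := by
    rw [primeFactors_eq_insert_primeFactors_div hn0 hp n.minFac_dvd]
    exact (Finset.card_insert_le _ _).trans h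
  have hmin : ∀ q ∈ n.primeFactors, n.minFac ≤ q := fun q hq =>
    Nat.minFac_le_of_dvd (Nat.prime_of_mem_primeFactors hq).two_le (Nat.dvd_of_mem_primeFactors hq)
  refine isNice_of_card_primeFactors_le hn0 (fun q hq => hcard.trans (hmin q hq)) fun q hq hsq => ?_
  rcases (hmin q hq).lt_or_eq with hlt | rfl
  · exact hcard.trans_lt hlt
  · rwa [primeFactors_div_eq_of_sq_dvd hn0 hp hsq] at h
end

section
/- For every prime p and every integer k ≥ 1, the integer n = p^k is nice. -/
/-!
Choose `a d = d / p`. If `d < e` are divisors of `p ^ k` with `1 < d`, then `p * d ∣ e`, so `d`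
divides both `e` and `a e = e / p`, and hence every integer congruent to `a e` modulo `e`. But no
multiple of `d` is congruent to `a d` modulo `d`, because `0 < d / p < d`. So no two of the
congruences overlap.
-/

theorem Overlap.symm {c₁ c₂ : ℤ × ℕ} : Overlap c₁ c₂ → Overlap c₂ c₁ :=
  fun ⟨x, h₁, h₂⟩ => ⟨x, h₂, h₁⟩

theorem Overlap.modEq_of_dvd_s5 {c₁ c₂ : ℤ × ℕ} {m : ℕ} (h : Overlap c₁ c₂) (h₁ : m ∣ c₁.2)
    (h₂ : m ∣ c₂.2) : c₁.1 ≡ c₂.1 [ZMOD m] := by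
  obtain ⟨x, hx₁, hx₂⟩ := h
  exact (hx₁.of_dvd (Int.natCast_dvd_natCast.mpr h₁)).symm.trans
    (hx₂.of_dvd (Int.natCast_dvd_natCast.mpr h₂))

theorem isNice_of_forall_lt_not_overlap {n : ℕ} (a : ℕ → ℤ)
    (h : ∀ d e, d ∣ n → e ∣ n → 1 < d → d < e → ¬ Overlap (a d, d) (a e, e)) : IsNice n := by
  refine ⟨a, ?_⟩
  rintro _ ⟨d, hd, hd₁, rfl⟩ _ ⟨e, he, he₁, rfl⟩ hne hover
  rcases lt_trichotomy d e with hlt | rfl | hgt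
  · exact absurd hover (h d e hd he hd₁ hlt)
  · exact absurd rfl hne
  · exact absurd hover.symm (h e d he hd he₁ hgt)

theorem not_overlap_div_of_mul_dvd {p d e : ℕ} (hp : 1 < p) (hd : 0 < d) (hpd : p ∣ d)
    (hde : p * d ∣ e) : ¬ Overlap (((d / p : ℕ) : ℤ), d) (((e / p : ℕ) : ℤ), e) := by
  intro hover
  have hmod : d / p ≡ e / p [MOD d] :=
    Int.natCast_modEq_iff.mp (hover.modEq_of_dvd_s5 dvd_rfl (dvd_of_mul_left_dvd hde))
  have hdvd : d ∣ d / p := (hmod.dvd_iff dvd_rfl).mpr (Nat.dvd_div_of_mul_dvd hde)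
  exact Nat.not_dvd_of_pos_of_lt (Nat.div_pos (Nat.le_of_dvd hd hpd) (zero_lt_one.trans hp))
    (Nat.div_lt_self hd hp) hdvd

theorem mul_dvd_of_dvd_prime_pow_of_lt {p k d e : ℕ} (hp : p.Prime) (hd : d ∣ p ^ k)
    (he : e ∣ p ^ k) (hlt : d < e) : p * d ∣ e := by
  obtain ⟨i, -, rfl⟩ := (Nat.dvd_prime_pow hp).mp hd
  obtain ⟨j, -, rfl⟩ := (Nat.dvd_prime_pow hp).mp he
  have hij : i < j := (Nat.pow_lt_pow_iff_right hp.one_lt).mp hlt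
  rw [← pow_succ']
  exact pow_dvd_pow p hij

theorem primePow_nice (p k : ℕ) (hp : p.Prime) (hk : 1 ≤ k) : IsNice (p ^ k) := by
  refine isNice_of_forall_lt_not_overlap (fun d => ((d / p : ℕ) : ℤ)) ?_
  intro d e hd he hd₁ hlt
  have hpd : p ∣ d := by
    simpa only [mul_one] using mul_dvd_of_dvd_prime_pow_of_lt hp (one_dvd _) hd hd₁
  have hde : p * d ∣ e := mul_dvd_of_dvd_prime_pow_of_lt hp hd he hlt
  exact not_overlap_div_of_mul_dvd hp.one_lt (zero_lt_one.trans hd₁) hpd hde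
end

section
/- Let p_1 < p_2 be odd primes, let a be an integer, let b, c, d be three integers that are pairwise incongruent modulo p_2, and let α_1 ≥ 1 and α_2 ≥ 1 be integers. Then there exist integers a_{i,j} for 1 ≤ i ≤ α_1 and 1 ≤ j ≤ α_2 such that the set of congruences { a_{i,j} (mod p_1^i · p_2^j) : 1 ≤ i ≤ α_1, 1 ≤ j ≤ α_2 } is good, and moreover each a_{i,j} satisfies a_{i,j} ≡ a (mod p_1) and a_{i,j} is congruent modulo p_2 to one of b, c, d. -/
/-! Fix coprime `m` and `n`. If `n ∤ e`, then every `x ≡ b + e n ^ k (mod n ^ (k + 1))` satisfies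
`n ^ k ∣ x - b` and `n ^ (k + 1) ∤ x - b`, so `x` determines the exponent `k` and then the digit
`e` modulo `n`. The two digits `c - b` and `d - b` are nonzero and distinct modulo `n`, and at
`k = 0` they give the residues `c` and `d`. Hence for the modulus `m ^ i n ^ j` one prescribes
modulo `n ^ j` the residue with digit `c - b` if `i = 1` and `d - b` if `i ≥ 2`: a common solution
of two congruences forces the same `j`, and either `i = 1` in both or `i ≥ 2` in both. The
remaining exponents `i ≥ 2` are told apart by the residue `a + m ^ (i - 1)` modulo `m ^ i`. -/

theorem IsGood.mono {A B : Set (ℤ × ℕ)} (hB : IsGood B) (hAB : A ⊆ B) : IsGood A :=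
  fun c₁ h₁ c₂ h₂ ↦ hB c₁ (hAB h₁) c₂ (hAB h₂)

section LeadingDigit

variable {n b e e' x : ℤ} {k l : ℕ}

theorem emultiplicity_sub_eq_of_modEq_add_mul_pow (hn : n ≠ 0) (he : ¬ n ∣ e)
    (h : x ≡ b + e * n ^ k [ZMOD n ^ (k + 1)]) : emultiplicity n (x - b) = k := by
  obtain ⟨t, ht⟩ := h.symm.dvd
  have hx : x - b = n ^ k * (e + n * t) := by linear_combination ht
  rw [emultiplicity_eq_coe, hx, pow_succ, mul_dvd_mul_iff_left (pow_ne_zero k hn)]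
  exact ⟨dvd_mul_right _ _, fun hdvd ↦ he ((dvd_add_left (dvd_mul_right n t)).1 hdvd)⟩

theorem exponent_eq_of_modEq_add_mul_pow (hn : n ≠ 0) (he : ¬ n ∣ e) (he' : ¬ n ∣ e')
    (h : x ≡ b + e * n ^ k [ZMOD n ^ (k + 1)]) (h' : x ≡ b + e' * n ^ l [ZMOD n ^ (l + 1)]) :
    k = l := by
  have hkl := (emultiplicity_sub_eq_of_modEq_add_mul_pow hn he h).symm.trans
    (emultiplicity_sub_eq_of_modEq_add_mul_pow hn he' h')
  exact_mod_cast hkl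

theorem digit_modEq_of_modEq_add_mul_pow (hn : n ≠ 0)
    (h : x ≡ b + e * n ^ k [ZMOD n ^ (k + 1)]) (h' : x ≡ b + e' * n ^ k [ZMOD n ^ (k + 1)]) :
    e ≡ e' [ZMOD n] := by
  have hmul := Int.ModEq.add_left_cancel' b (h.symm.trans h')
  rw [pow_succ'] at hmul
  exact Int.ModEq.mul_right_cancel' (pow_ne_zero k hn) hmul

end LeadingDigit

theorem exists_modEq_and_modEq_of_isCoprime {m n : ℤ} (hmn : IsCoprime m n) (u v : ℤ) :
    ∃ x, x ≡ u [ZMOD m] ∧ x ≡ v [ZMOD n] := by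
  obtain ⟨r, s, hrs⟩ := hmn
  refine ⟨u * (s * n) + v * (r * m), Int.ModEq.symm ?_, Int.ModEq.symm ?_⟩
  · exact Int.modEq_iff_dvd.2 ⟨r * (v - u), by linear_combination u * hrs⟩
  · exact Int.modEq_iff_dvd.2 ⟨s * (u - v), by linear_combination v * hrs⟩

/-- The integer `x` lies in the residue class chosen for the modulus `m ^ (i + 1) * n ^ (j + 1)`.
Both exponents are shifted by one, so that `i` and `j` range over all natural numbers. -/
def InGridClass (m n a b c d : ℤ) (i j : ℕ) (x : ℤ) : Prop :=
  x ≡ a + (if i = 0 then 0 else m ^ i) [ZMOD m ^ (i + 1)] ∧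
    x ≡ b + (if i = 0 then c - b else d - b) * n ^ j [ZMOD n ^ (j + 1)]

namespace InGridClass

variable {m n a b c d x y : ℤ} {i i' j j' : ℕ}

theorem exists_of_isCoprime (hmn : IsCoprime m n) (a b c d : ℤ) (i j : ℕ) :
    ∃ x, InGridClass m n a b c d i j x :=
  exists_modEq_and_modEq_of_isCoprime hmn.pow _ _

theorem of_modEq (hy : InGridClass m n a b c d i j y)
    (hxy : x ≡ y [ZMOD m ^ (i + 1) * n ^ (j + 1)]) : InGridClass m n a b c d i j x :=
  ⟨(hxy.of_mul_right _).trans hy.1, (hxy.of_mul_left _).trans hy.2⟩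

theorem modEq_left (hx : InGridClass m n a b c d i j x) : x ≡ a [ZMOD m] := by
  refine (hx.1.of_dvd (dvd_pow_self m i.succ_ne_zero)).trans (Int.add_modEq_left_iff.2 ?_)
  split_ifs with hi
  · exact dvd_zero m
  · exact dvd_pow_self m hi

theorem modEq_right (hx : InGridClass m n a b c d i j x) :
    x ≡ b [ZMOD n] ∨ x ≡ c [ZMOD n] ∨ x ≡ d [ZMOD n] := by
  have hxn := hx.2.of_dvd (dvd_pow_self n j.succ_ne_zero)
  rcases eq_or_ne j 0 with rfl | hj
  · rw [pow_zero, mul_one] at hxn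
    split_ifs at hxn
    · exact .inr (.inl (by rwa [add_sub_cancel] at hxn))
    · exact .inr (.inr (by rwa [add_sub_cancel] at hxn))
  · exact .inl (hxn.trans (Int.add_modEq_left_iff.2 ((dvd_pow_self n hj).mul_left _)))

theorem exponents_eq (hm : m ≠ 0) (hm' : ¬ IsUnit m) (hn : n ≠ 0) (hbc : ¬ b ≡ c [ZMOD n])
    (hbd : ¬ b ≡ d [ZMOD n]) (hcd : ¬ c ≡ d [ZMOD n]) (hx : InGridClass m n a b c d i j x)
    (hx' : InGridClass m n a b c d i' j' x) : i = i' ∧ j = j' := by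
  obtain ⟨hxm, hxn⟩ := hx
  obtain ⟨hxm', hxn'⟩ := hx'
  have digit_ne_zero (k : ℕ) : ¬ n ∣ if k = 0 then c - b else d - b := by
    split_ifs <;> rwa [← Int.modEq_iff_dvd]
  obtain rfl : j = j' :=
    exponent_eq_of_modEq_add_mul_pow hn (digit_ne_zero i) (digit_ne_zero i') hxn hxn'
  have hdigit := digit_modEq_of_modEq_add_mul_pow hn hxn hxn'
  refine ⟨?_, rfl⟩
  rcases eq_or_ne i 0 with rfl | hi <;> rcases eq_or_ne i' 0 with rfl | hi'
  · rfl
  · rw [if_pos rfl, if_neg hi'] at hdigit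
    exact absurd (Int.ModEq.add_right_cancel' (-b) hdigit) hcd
  · rw [if_neg hi, if_pos rfl] at hdigit
    exact absurd (Int.ModEq.add_right_cancel' (-b) hdigit).symm hcd
  · rw [if_neg hi, ← one_mul (m ^ i)] at hxm
    rw [if_neg hi', ← one_mul (m ^ i')] at hxm'
    have hm1 : ¬ m ∣ 1 := mt isUnit_of_dvd_one hm'
    exact exponent_eq_of_modEq_add_mul_pow hm hm1 hm1 hxm hxm'

end InGridClass

theorem twoFactor_good_general {m n : ℕ} (hm : 1 < m) (hmn : m.Coprime n) (a : ℤ) {b c d : ℤ}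
    (hbc : ¬ b ≡ c [ZMOD (n : ℤ)]) (hbd : ¬ b ≡ d [ZMOD (n : ℤ)])
    (hcd : ¬ c ≡ d [ZMOD (n : ℤ)]) :
    ∃ f : ℕ → ℕ → ℤ,
      IsGood {x : ℤ × ℕ | ∃ i j : ℕ, 1 ≤ i ∧ 1 ≤ j ∧ x = (f i j, m ^ i * n ^ j)} ∧
      ∀ i j : ℕ, 1 ≤ i → 1 ≤ j →
        f i j ≡ a [ZMOD (m : ℤ)] ∧
        (f i j ≡ b [ZMOD (n : ℤ)] ∨ f i j ≡ c [ZMOD (n : ℤ)] ∨ f i j ≡ d [ZMOD (n : ℤ)]) := by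
  have hm0 : (m : ℤ) ≠ 0 := by lia
  have hm1 : ¬ IsUnit (m : ℤ) := by rw [Int.ofNat_isUnit, Nat.isUnit_iff]; lia
  have hn0 : (n : ℤ) ≠ 0 := by
    rw [Nat.cast_ne_zero]
    rintro rfl
    exact hm.ne' ((Nat.coprime_zero_right m).1 hmn)
  choose g hg using InGridClass.exists_of_isCoprime (Nat.isCoprime_iff_coprime.2 hmn) a b c d
  refine ⟨fun i j ↦ g (i - 1) (j - 1), ?_,
    fun _ _ _ _ ↦ ⟨(hg _ _).modEq_left, (hg _ _).modEq_right⟩⟩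
  rintro _ ⟨i, j, hi, hj, rfl⟩ _ ⟨i', j', hi', hj', rfl⟩ hne ⟨x, hx, hx'⟩
  obtain ⟨k, rfl⟩ := Nat.exists_eq_add_of_le' hi
  obtain ⟨l, rfl⟩ := Nat.exists_eq_add_of_le' hj
  obtain ⟨k', rfl⟩ := Nat.exists_eq_add_of_le' hi'
  obtain ⟨l', rfl⟩ := Nat.exists_eq_add_of_le' hj'
  push_cast at hx hx'
  obtain ⟨rfl, rfl⟩ := InGridClass.exponents_eq hm0 hm1 hn0 hbc hbd hcd
    ((hg k l).of_modEq hx) ((hg k' l').of_modEq hx')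
  exact absurd rfl hne

theorem twoFactor_good (p₁ p₂ : ℕ) (hp₁ : p₁.Prime) (hp₂ : p₂.Prime)
    (hodd₁ : Odd p₁) (hodd₂ : Odd p₂) (hlt : p₁ < p₂)
    (a b c d : ℤ)
    (hbc : ¬ b ≡ c [ZMOD (p₂ : ℤ)]) (hbd : ¬ b ≡ d [ZMOD (p₂ : ℤ)])
    (hcd : ¬ c ≡ d [ZMOD (p₂ : ℤ)])
    (α₁ α₂ : ℕ) (hα₁ : 1 ≤ α₁) (hα₂ : 1 ≤ α₂) :
    ∃ f : ℕ → ℕ → ℤ,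
      IsGood {x : ℤ × ℕ | ∃ i j : ℕ, 1 ≤ i ∧ i ≤ α₁ ∧ 1 ≤ j ∧ j ≤ α₂ ∧
        x = (f i j, p₁ ^ i * p₂ ^ j)} ∧
      ∀ i j : ℕ, 1 ≤ i → i ≤ α₁ → 1 ≤ j → j ≤ α₂ →
        f i j ≡ a [ZMOD (p₁ : ℤ)] ∧
        (f i j ≡ b [ZMOD (p₂ : ℤ)] ∨ f i j ≡ c [ZMOD (p₂ : ℤ)] ∨
          f i j ≡ d [ZMOD (p₂ : ℤ)]) := by
  obtain ⟨f, hgood, hf⟩ := twoFactor_good_general hp₁.one_lt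
    ((Nat.coprime_primes hp₁ hp₂).2 hlt.ne) a hbc hbd hcd
  exact ⟨f, hgood.mono fun _ ⟨i, j, hi, _, hj, _, hx⟩ ↦ ⟨i, j, hi, hj, hx⟩,
    fun i j hi _ hj _ ↦ hf i j hi hj⟩
end

section
/- Let p_1 < p_2 be odd primes and let α_1 > 1 and α_2 > 1 be integers. Then n = p_1^{α_1} · p_2^{α_2} is nice. -/
/-!
Choose the residue `a d` so that, for each prime `p ∣ d`, the exponent of `p` in `a d` is one less
than its exponent in `d`, with a prescribed last nonzero digit in base `p`. A common solution of the
congruences modulo `d` and `e` then forces, at each common prime, equal exponents and equal digits.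

Arrange the primes dividing `n` on a circle and let the digit at `p` be the number of steps from `p`
to the next prime dividing `d`. If `d` and `e` share a prime and their digits agree at all common
primes, walking around the circle from a common prime meets the same primes for both, so `d` and `e`
have the same prime factors, and hence `d = e`. The digits lie between `1` and the number of primes
dividing `n`, so they are available as soon as every such prime exceeds that number; for two primes
this says that both are odd.
-/

section LeadingDigit

variable {p c c' x : ℤ} {i j k : ℕ}

theorem pow_dvd_iff_le_of_modEq_mul_pow (hp : p ≠ 0) (hc : ¬p ∣ c)
    (hx : x ≡ c * p ^ i [ZMOD p ^ (i + 1)]) : p ^ k ∣ x ↔ k ≤ i := by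
  constructor
  · intro hk
    by_contra! hik
    have hdvd : p ^ i * p ∣ p ^ i * c := by
      rw [← pow_succ, mul_comm _ c]
      exact hx.dvd_iff.mp ((pow_dvd_pow p hik).trans hk)
    exact hc ((mul_dvd_mul_iff_left (pow_ne_zero i hp)).mp hdvd)
  · intro hk
    have hx' := hx.of_dvd (pow_dvd_pow p (Nat.le_succ_of_le hk))
    exact hx'.dvd_iff.mpr ((pow_dvd_pow p hk).mul_left c)

theorem eq_and_modEq_of_modEq_mul_pow (hp : p ≠ 0) (hc : ¬p ∣ c) (hc' : ¬p ∣ c')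
    (hx : x ≡ c * p ^ i [ZMOD p ^ (i + 1)]) (hx' : x ≡ c' * p ^ j [ZMOD p ^ (j + 1)]) :
    i = j ∧ c ≡ c' [ZMOD p] := by
  have hdvd {k : ℕ} := pow_dvd_iff_le_of_modEq_mul_pow (k := k) hp hc hx
  have hdvd' {k : ℕ} := pow_dvd_iff_le_of_modEq_mul_pow (k := k) hp hc' hx'
  obtain rfl : i = j := le_antisymm (hdvd'.mp (hdvd.mpr le_rfl)) (hdvd.mp (hdvd'.mpr le_rfl))
  refine ⟨rfl, Int.ModEq.mul_right_cancel' (pow_ne_zero i hp) ?_⟩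
  rw [← pow_succ']
  exact hx.symm.trans hx'

end LeadingDigit

theorem exists_modEq_mul_pow_factorization_sub_one (d : ℕ) (c : ℕ → ℕ) :
    ∃ a : ℤ, ∀ p ∈ d.primeFactors,
      a ≡ c p * (p : ℤ) ^ (d.factorization p - 1) [ZMOD (p : ℤ) ^ d.factorization p] := by
  obtain ⟨a, ha⟩ := Nat.chineseRemainderOfFinset (fun p => c p * p ^ (d.factorization p - 1))
    (fun p => p ^ d.factorization p) d.primeFactors
    (fun p hp => pow_ne_zero _ (Nat.prime_of_mem_primeFactors hp).ne_zero)
    (fun p hp q hq hpq => Nat.coprime_pow_primes _ _ (Nat.prime_of_mem_primeFactors hp)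
      (Nat.prime_of_mem_primeFactors hq) hpq)
  exact ⟨a, fun p hp => by exact_mod_cast Int.natCast_modEq_iff.mpr (ha p hp)⟩

theorem factorization_eq_and_eq_of_overlap {p d e c c' : ℕ} {a b : ℤ}
    (hpd : p ∈ d.primeFactors) (hpe : p ∈ e.primeFactors)
    (hc : c ∈ Set.Ioo 0 p) (hc' : c' ∈ Set.Ioo 0 p)
    (ha : a ≡ c * (p : ℤ) ^ (d.factorization p - 1) [ZMOD (p : ℤ) ^ d.factorization p])
    (hb : b ≡ c' * (p : ℤ) ^ (e.factorization p - 1) [ZMOD (p : ℤ) ^ e.factorization p])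
    (h : Overlap (a, d) (b, e)) : d.factorization p = e.factorization p ∧ c = c' := by
  obtain ⟨x, hxa, hxb⟩ := h
  have hp : (p : ℤ) ≠ 0 := by exact_mod_cast (Nat.prime_of_mem_primeFactors hpd).ne_zero
  have not_dvd {k : ℕ} (hk : k ∈ Set.Ioo 0 p) : ¬(p : ℤ) ∣ k := by
    exact_mod_cast Nat.not_dvd_of_pos_of_lt hk.1 hk.2
  have hxd := (hxa.of_dvd (by exact_mod_cast d.ordProj_dvd p)).trans ha
  have hxe := (hxb.of_dvd (by exact_mod_cast e.ordProj_dvd p)).trans hb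
  obtain ⟨i, hi⟩ := Nat.exists_eq_add_one_of_ne_zero
    (Finsupp.mem_support_iff (f := d.factorization).mp hpd)
  obtain ⟨j, hj⟩ := Nat.exists_eq_add_one_of_ne_zero
    (Finsupp.mem_support_iff (f := e.factorization).mp hpe)
  rw [hi, Nat.add_sub_cancel] at hxd
  rw [hj, Nat.add_sub_cancel] at hxe
  obtain ⟨hij, hcc'⟩ := eq_and_modEq_of_modEq_mul_pow hp (not_dvd hc) (not_dvd hc') hxd hxe
  exact ⟨by rw [hi, hj, hij],
    (Int.natCast_modEq_iff.mp hcc').eq_of_lt_of_lt hc.2 hc'.2⟩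

theorem isNice_of_separating_labels {n : ℕ} (hn : n ≠ 0) (c : Finset ℕ → ℕ → ℕ)
    (hc : ∀ S ⊆ n.primeFactors, ∀ p ∈ S, c S p ∈ Set.Ioo 0 p)
    (hsep : ∀ S ⊆ n.primeFactors, ∀ T ⊆ n.primeFactors, (S ∩ T).Nonempty →
      (∀ p ∈ S ∩ T, c S p = c T p) → S = T) : IsNice n := by
  choose a ha using fun d : ℕ => exists_modEq_mul_pow_factorization_sub_one d (c d.primeFactors)
  refine ⟨a, ?_⟩
  rintro _ ⟨d, hd, -, rfl⟩ _ ⟨e, he, -, rfl⟩ hne hover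
  have hdn := Nat.primeFactors_mono hd hn
  have hen := Nat.primeFactors_mono he hn
  have hd0 := ne_zero_of_dvd_ne_zero hn hd
  have he0 := ne_zero_of_dvd_ne_zero hn he
  have agree : ∀ p ∈ d.primeFactors ∩ e.primeFactors, d.factorization p = e.factorization p ∧
      c d.primeFactors p = c e.primeFactors p := by
    intro p hp
    obtain ⟨hpd, hpe⟩ := Finset.mem_inter.mp hp
    exact factorization_eq_and_eq_of_overlap hpd hpe (hc _ hdn p hpd) (hc _ hen p hpe)
      (ha d p hpd) (ha e p hpe) hover
  by_contra hcop
  have hinter : (d.primeFactors ∩ e.primeFactors).Nonempty := by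
    rwa [← Finset.not_disjoint_iff_nonempty_inter, Nat.disjoint_primeFactors hd0 he0]
  have hsupp : d.primeFactors = e.primeFactors :=
    hsep _ hdn _ hen hinter fun p hp => (agree p hp).2
  have hde : d = e := by
    refine Nat.eq_of_factorization_eq hd0 he0 fun p => ?_
    by_cases hp : p ∈ d.primeFactors
    · exact (agree p (Finset.mem_inter.mpr ⟨hp, hsupp ▸ hp⟩)).1
    · have hp' : p ∉ e.primeFactors := hsupp ▸ hp
      rw [Finsupp.notMem_support_iff.mp hp, Finsupp.notMem_support_iff.mp hp']
  exact hne (by rw [hde])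

section ReturnTime

variable {ι : Type*} {σ : Equiv.Perm ι} {s S T : Finset ι} {i : ι}

/-- The first return time of `i` to `S` under iteration of `σ`: the least `m > 0` such that
`(σ ^ m) i ∈ S`, with the value `0` if the orbit never enters `S`. For a cycle `σ` this is the
distance from `i` to the next element of `S` along the cycle. -/
noncomputable def returnTime (σ : Equiv.Perm ι) (S : Finset ι) (i : ι) : ℕ :=
  sInf {m | 0 < m ∧ (σ ^ m) i ∈ S}

theorem returnTime_le {m : ℕ} (hm : 0 < m) (hmS : (σ ^ m) i ∈ S) : returnTime σ S i ≤ m :=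
  Nat.sInf_le ⟨hm, hmS⟩

theorem returnTime_pos {m : ℕ} (hm : 0 < m) (hmS : (σ ^ m) i ∈ S) : 0 < returnTime σ S i :=
  (Nat.sInf_mem (s := {m | 0 < m ∧ (σ ^ m) i ∈ S}) ⟨m, hm, hmS⟩).1

theorem pow_returnTime_mem (h : 0 < returnTime σ S i) : (σ ^ returnTime σ S i) i ∈ S :=
  (Nat.sInf_mem (Nat.nonempty_of_pos_sInf h)).2

theorem returnTime_mem_Ioc_of_isCycleOn (hσ : σ.IsCycleOn (s : Set ι)) (his : i ∈ s)
    (hiS : i ∈ S) : returnTime σ S i ∈ Set.Ioc 0 s.card := by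
  have hcard : 0 < s.card := Finset.card_pos.mpr ⟨i, his⟩
  have hmem : (σ ^ s.card) i ∈ S := by rwa [hσ.pow_card_apply his]
  exact ⟨returnTime_pos hcard hmem, returnTime_le hcard hmem⟩

theorem pow_mem_of_returnTime_eq (h : ∀ j ∈ S, j ∈ T → returnTime σ S j = returnTime σ T j)
    (hiS : i ∈ S) (hiT : i ∈ T) {m : ℕ} (hm : (σ ^ m) i ∈ S) : (σ ^ m) i ∈ T := by
  induction m using Nat.strong_induction_on generalizing i with
  | _ m ih =>
    obtain rfl | hm0 := m.eq_zero_or_pos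
    · exact hiT
    set r := returnTime σ S i with hr
    have hr0 : 0 < r := returnTime_pos hm0 hm
    have hrm : r ≤ m := returnTime_le hm0 hm
    have hrS : (σ ^ r) i ∈ S := pow_returnTime_mem hr0
    have hrT : (σ ^ r) i ∈ T := by
      rw [h i hiS hiT] at hr
      exact hr ▸ pow_returnTime_mem (hr ▸ hr0)
    have hsplit : (σ ^ (m - r)) ((σ ^ r) i) = (σ ^ m) i := by
      rw [← Equiv.Perm.mul_apply, ← pow_add, Nat.sub_add_cancel hrm]
    rw [← hsplit] at hm ⊢
    exact ih (m - r) (by lia) hrS hrT hm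

theorem subset_of_returnTime_eq (hσ : σ.IsCycleOn (s : Set ι)) (hS : S ⊆ s)
    (hiS : i ∈ S) (hiT : i ∈ T)
    (h : ∀ j ∈ S, j ∈ T → returnTime σ S j = returnTime σ T j) : S ⊆ T := by
  intro j hj
  obtain ⟨m, -, rfl⟩ := hσ.exists_pow_eq (hS hiS) (hS hj)
  exact pow_mem_of_returnTime_eq h hiS hiT hj

end ReturnTime

theorem twoOddPrimePow_nice_general {n : ℕ} (hn : n ≠ 0)
    (h : ∀ p ∈ n.primeFactors, n.primeFactors.card < p) : IsNice n := by
  obtain ⟨σ, hσ, -⟩ := n.primeFactors.countable_toSet.exists_cycleOn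
  refine isNice_of_separating_labels hn (returnTime σ) (fun S hS p hp => ?_)
    fun S hS T hT hST heq => ?_
  · obtain ⟨hpos, hle⟩ := returnTime_mem_Ioc_of_isCycleOn hσ (hS hp) hp
    exact ⟨hpos, hle.trans_lt (h p (hS hp))⟩
  · obtain ⟨p, hp⟩ := hST
    obtain ⟨hpS, hpT⟩ := Finset.mem_inter.mp hp
    have heq' (q : ℕ) (hqS : q ∈ S) (hqT : q ∈ T) : returnTime σ S q = returnTime σ T q :=
      heq q (Finset.mem_inter.mpr ⟨hqS, hqT⟩)
    exact (subset_of_returnTime_eq hσ hS hpS hpT heq').antisymm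
      (subset_of_returnTime_eq hσ hT hpT hpS fun q hqT hqS => (heq' q hqS hqT).symm)

theorem isNice_of_odd_of_card_primeFactors_le_two {n : ℕ} (hodd : Odd n)
    (hcard : n.primeFactors.card ≤ 2) : IsNice n := by
  refine twoOddPrimePow_nice_general hodd.pos.ne' fun p hp => hcard.trans_lt ?_
  have hp2 : p ≠ 2 := (hodd.of_dvd_nat (Nat.dvd_of_mem_primeFactors hp)).ne_two_of_dvd_nat dvd_rfl
  exact (Nat.prime_of_mem_primeFactors hp).two_le.lt_of_ne' hp2

theorem primeFactors_pow_mul_pow_subset {p q : ℕ} (hp : p.Prime) (hq : q.Prime) (a b : ℕ) :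
    (p ^ a * q ^ b).primeFactors ⊆ {p, q} := by
  intro r hr
  have hr' := Nat.prime_of_mem_primeFactors hr
  obtain hrp | hrq := hr'.dvd_mul.mp (Nat.dvd_of_mem_primeFactors hr)
  · simp [(Nat.prime_dvd_prime_iff_eq hr' hp).mp (hr'.dvd_of_dvd_pow hrp)]
  · simp [(Nat.prime_dvd_prime_iff_eq hr' hq).mp (hr'.dvd_of_dvd_pow hrq)]

theorem card_primeFactors_pow_mul_pow_le_two {p q : ℕ} (hp : p.Prime) (hq : q.Prime) (a b : ℕ) :
    (p ^ a * q ^ b).primeFactors.card ≤ 2 :=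
  (Finset.card_le_card (primeFactors_pow_mul_pow_subset hp hq a b)).trans Finset.card_le_two

theorem twoOddPrimePow_nice (p₁ p₂ α₁ α₂ : ℕ) (hp₁ : p₁.Prime) (hp₂ : p₂.Prime)
    (hodd₁ : Odd p₁) (hodd₂ : Odd p₂) (hlt : p₁ < p₂)
    (hα₁ : 1 < α₁) (hα₂ : 1 < α₂) : IsNice (p₁ ^ α₁ * p₂ ^ α₂) :=
  isNice_of_odd_of_card_primeFactors_le_two (hodd₁.pow.mul hodd₂.pow)
    (card_primeFactors_pow_mul_pow_le_two hp₁ hp₂ α₁ α₂)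
end

section
/- Let n = p_1 · p_2^{α_2} · ... · p_t^{α_t} where p_1 < p_2 < ... < p_t are primes, t ≥ 3, α_k ≥ 1 for all 2 ≤ k ≤ t, and t ≤ p_1. Then n is nice. -/
/-! The residue of a divisor `d` is prescribed, by the Chinese remainder theorem, separately at each
prime power `q ^ e` exactly dividing `d`: modulo `q ^ e` its base-`q` expansion is a single digit
followed by `e - 1` zeros. If the digit is nonzero, every integer in this class has `q`-adic
valuation `e - 1`, so it determines the exponent `e` and then the digit. The digits of `d` encode a
cyclic permutation of the set of primes dividing `d`: the digit at `q` is a label, between `1` and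
the number `t` of primes dividing `n`, of the prime that follows `q`. All primes being at least `t`,
labels are determined by their digits, and only for `q = t` can a label give the digit `0`; there
the exponent is `1` anyway. If the classes of `d` and `d'` meet, their cyclic permutations agree on
the common primes; if there is such a prime, the orbit of either cycle stays inside the other set,
so `d` and `d'` have the same primes, hence also the same exponents. -/

open Finset

theorem subset_of_isCycleOn_of_mapsTo {ι : Type*} {S : Finset ι} {T : Set ι} {f : Equiv.Perm ι}
    (hf : f.IsCycleOn S) (hT : Set.MapsTo f T T) {k : ι} (hkS : k ∈ S) (hkT : k ∈ T) :
    (S : Set ι) ⊆ T := by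
  intro i hi
  obtain ⟨m, -, rfl⟩ := hf.exists_pow_eq hkS hi
  exact hT.perm_pow m hkT

theorem eq_of_isCycleOn_of_eqOn_inter {ι : Type*} {S T : Finset ι} {f g : Equiv.Perm ι}
    (hf : f.IsCycleOn S) (hg : g.IsCycleOn T) (hfg : Set.EqOn f g (S ∩ T)) {k : ι}
    (hkS : k ∈ S) (hkT : k ∈ T) : S = T := by
  have hfU : Set.MapsTo f (S ∩ T) (S ∩ T) := fun i hi ↦
    ⟨hf.1.mapsTo hi.1, hfg hi ▸ hg.1.mapsTo hi.2⟩
  have hgU : Set.MapsTo g (S ∩ T) (S ∩ T) := hfU.congr hfg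
  exact Subset.antisymm
    (fun i hi ↦ (subset_of_isCycleOn_of_mapsTo hf hfU hkS ⟨hkS, hkT⟩ hi).2)
    (fun i hi ↦ (subset_of_isCycleOn_of_mapsTo hg hgU hkT ⟨hkS, hkT⟩ hi).1)

theorem emultiplicity_eq_of_modEq_mul_pow {q u x : ℤ} {e : ℕ} (hq : q ≠ 0) (hu : ¬ q ∣ u)
    (h : x ≡ u * q ^ e [ZMOD q ^ (e + 1)]) : emultiplicity q x = e := by
  rw [emultiplicity_eq_coe, (h.of_dvd (pow_dvd_pow q e.le_succ)).dvd_iff, h.dvd_iff, pow_succ',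
    Int.mul_dvd_mul_iff_right (pow_ne_zero e hq)]
  exact ⟨dvd_mul_left _ _, hu⟩

theorem exists_modEq_prime_pow {s : Finset ℕ} (hs : ∀ q ∈ s, q.Prime) (e r : ℕ → ℕ) :
    ∃ a : ℕ, ∀ q ∈ s, a ≡ r q [MOD q ^ e q] := by
  have hcoprime : (s : Set ℕ).Pairwise (Function.onFun Nat.Coprime fun q ↦ q ^ e q) :=
    fun q hq q' hq' hne ↦ ((Nat.coprime_primes (hs q hq) (hs q' hq')).2 hne).pow _ _
  obtain ⟨a, ha⟩ := Nat.chineseRemainderOfFinset r (fun q ↦ q ^ e q) s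
    (fun q hq ↦ pow_ne_zero _ (hs q hq).ne_zero) hcoprime
  exact ⟨a, ha⟩

theorem eq_of_modEq_of_mem_Icc {a b t q : ℕ} (h : a ≡ b [MOD q]) (ha : a ∈ Set.Icc 1 t)
    (hb : b ∈ Set.Icc 1 t) (htq : t ≤ q) : a = b := by
  obtain ⟨ha₁, ha₂⟩ := ha
  obtain ⟨hb₁, hb₂⟩ := hb
  exact h.eq_of_abs_lt (abs_lt.2 ⟨by lia, by lia⟩)

theorem eq_of_primeFactors_eq_of_factorization_eq {d d' : ℕ} (hd : d ≠ 0) (hd' : d' ≠ 0)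
    (hpf : d.primeFactors = d'.primeFactors)
    (hfac : ∀ q ∈ d.primeFactors, d.factorization q = d'.factorization q) : d = d' :=
  Nat.eq_of_factorization_eq' hd hd' (Finsupp.ext_iff'.2 ⟨hpf, hfac⟩)

theorem factorization_eq_one_of_dvd {n d q : ℕ} (hn : n ≠ 0) (hd : d ∣ n)
    (hq : q ∈ d.primeFactors) (hnq : n.factorization q ≤ 1) : d.factorization q = 1 :=
  le_antisymm
    (((Nat.factorization_le_iff_dvd (ne_zero_of_dvd_ne_zero hn hd) hn).2 hd q).trans hnq)
    (Nat.one_le_iff_ne_zero.2 (Finsupp.mem_support_iff.1 hq))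

/-- At every prime power `q ^ e` exactly dividing `d`, the residue of `x` modulo `q ^ e` has the
base-`q` expansion consisting of the digit `u q` followed by `e - 1` zeros. These are the classes
from which the residue modulo `d` is glued. A value `u q ≥ q` stands for the digit `u q % q`. -/
def HasLeadingDigits (u : ℕ → ℕ) (d : ℕ) (x : ℤ) : Prop :=
  ∀ q ∈ d.primeFactors, x ≡ u q * q ^ (d.factorization q - 1) [ZMOD q ^ d.factorization q]

theorem exists_hasLeadingDigits (u : ℕ → ℕ) (d : ℕ) : ∃ x, HasLeadingDigits u d x := by
  obtain ⟨a, ha⟩ := exists_modEq_prime_pow (fun _ ↦ Nat.prime_of_mem_primeFactors)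
    d.factorization (fun q ↦ u q * q ^ (d.factorization q - 1))
  exact ⟨a, fun q hq ↦ mod_cast Int.natCast_modEq_iff.2 (ha q hq)⟩

namespace HasLeadingDigits

variable {u u' : ℕ → ℕ} {d d' q : ℕ} {x y : ℤ}

theorem of_modEq (hy : HasLeadingDigits u d y) (hxy : x ≡ y [ZMOD d]) :
    HasLeadingDigits u d x := fun q hq ↦
  (hxy.of_dvd (mod_cast Nat.ordProj_dvd d q)).trans (hy q hq)

theorem emultiplicity_add_one (hx : HasLeadingDigits u d x) (hq : q ∈ d.primeFactors)
    (hu : ¬ q ∣ u q) : emultiplicity (q : ℤ) x + 1 = d.factorization q := by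
  have hpos : d.factorization q ≠ 0 := Finsupp.mem_support_iff.1 hq
  obtain ⟨e, he⟩ := Nat.exists_eq_succ_of_ne_zero hpos
  have hxq := hx q hq
  rw [he] at hxq ⊢
  rw [emultiplicity_eq_of_modEq_mul_pow (mod_cast (Nat.prime_of_mem_primeFactors hq).ne_zero)
    (Int.natCast_dvd_natCast.not.2 hu) hxq]
  rfl

theorem factorization_eq (hx : HasLeadingDigits u d x) (hx' : HasLeadingDigits u' d' x)
    (hq : q ∈ d.primeFactors) (hq' : q ∈ d'.primeFactors) (hu : ¬ q ∣ u q) (hu' : ¬ q ∣ u' q) :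
    d.factorization q = d'.factorization q :=
  mod_cast (hx.emultiplicity_add_one hq hu).symm.trans (hx'.emultiplicity_add_one hq' hu')

theorem digit_modEq (hx : HasLeadingDigits u d x) (hx' : HasLeadingDigits u' d' x)
    (hq : q ∈ d.primeFactors) (hq' : q ∈ d'.primeFactors)
    (he : d.factorization q = d'.factorization q) : u q ≡ u' q [MOD q] := by
  have hq0 : (q : ℤ) ≠ 0 := mod_cast (Nat.prime_of_mem_primeFactors hq).ne_zero
  have h := (hx q hq).symm.trans (he ▸ hx' q hq')
  rw [← mul_pow_sub_one (Finsupp.mem_support_iff.1 hq) (q : ℤ)] at h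
  exact Int.natCast_modEq_iff.1 (h.mul_right_cancel' (pow_ne_zero _ hq0))

theorem factorization_eq_of_dvd {n t : ℕ} (hn : n ≠ 0) (ht : n.factorization t ≤ 1)
    (hd : d ∣ n) (hd' : d' ∣ n) (hx : HasLeadingDigits u d x) (hx' : HasLeadingDigits u' d' x)
    (hq : q ∈ d.primeFactors) (hq' : q ∈ d'.primeFactors) (htq : t ≤ q)
    (hu : u q ∈ Set.Icc 1 t) (hu' : u' q ∈ Set.Icc 1 t) :
    d.factorization q = d'.factorization q := by
  obtain rfl | htq := htq.eq_or_lt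
  · rw [factorization_eq_one_of_dvd hn hd hq ht, factorization_eq_one_of_dvd hn hd' hq' ht]
  · exact hx.factorization_eq hx' hq hq'
      (Nat.not_dvd_of_pos_of_lt hu.1 (hu.2.trans_lt htq))
      (Nat.not_dvd_of_pos_of_lt hu'.1 (hu'.2.trans_lt htq))

end HasLeadingDigits

/-- The digits of the divisor `d`: the digit at `q` is the label, under `c`, of the successor of `q`
for the permutation `σ` of the set of primes dividing `d`. -/
def successorLabel (c : ℕ → ℕ) (σ : Finset ℕ → Equiv.Perm ℕ) (d q : ℕ) : ℕ :=
  c (σ d.primeFactors q)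

theorem eq_of_hasLeadingDigits_successorLabel {n t : ℕ} {c : ℕ → ℕ} {σ : Finset ℕ → Equiv.Perm ℕ}
    (hn : n ≠ 0) (htle : ∀ q ∈ n.primeFactors, t ≤ q) (ht : n.factorization t ≤ 1)
    (hc : Set.InjOn c n.primeFactors) (hct : Set.MapsTo c n.primeFactors (Set.Icc 1 t))
    (hσ : ∀ S : Finset ℕ, (σ S).IsCycleOn S) {d d' : ℕ} (hd : d ∣ n) (hd' : d' ∣ n) {x : ℤ}
    (hx : HasLeadingDigits (successorLabel c σ d) d x)
    (hx' : HasLeadingDigits (successorLabel c σ d') d' x) {q : ℕ} (hq : q ∈ d.primeFactors)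
    (hq' : q ∈ d'.primeFactors) : d = d' := by
  have hsucc {d r : ℕ} (hd : d ∣ n) (hr : r ∈ d.primeFactors) :
      σ d.primeFactors r ∈ n.primeFactors :=
    Nat.primeFactors_mono hd hn ((hσ d.primeFactors).1.mapsTo hr)
  have hfac (r : ℕ) (hr : r ∈ d.primeFactors) (hr' : r ∈ d'.primeFactors) :
      d.factorization r = d'.factorization r :=
    hx.factorization_eq_of_dvd hn ht hd hd' hx' hr hr' (htle r (Nat.primeFactors_mono hd hn hr))
      (hct (hsucc hd hr)) (hct (hsucc hd' hr'))
  have hagree : Set.EqOn (σ d.primeFactors) (σ d'.primeFactors)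
      (d.primeFactors ∩ d'.primeFactors) := fun r ⟨hr, hr'⟩ ↦
    hc (hsucc hd hr) (hsucc hd' hr') <|
      eq_of_modEq_of_mem_Icc (hx.digit_modEq hx' hr hr' (hfac r hr hr')) (hct (hsucc hd hr))
        (hct (hsucc hd' hr')) (htle r (Nat.primeFactors_mono hd hn hr))
  have hpf : d.primeFactors = d'.primeFactors :=
    eq_of_isCycleOn_of_eqOn_inter (hσ _) (hσ _) hagree hq hq'
  exact eq_of_primeFactors_eq_of_factorization_eq (ne_zero_of_dvd_ne_zero hn hd)
    (ne_zero_of_dvd_ne_zero hn hd') hpf fun r hr ↦ hfac r hr (hpf ▸ hr)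

theorem isNice_of_card_primeFactors_le_s14 {n : ℕ} (hn : n ≠ 0)
    (hcard : ∀ q ∈ n.primeFactors, #n.primeFactors ≤ q)
    (hfac : n.factorization #n.primeFactors ≤ 1) : IsNice n := by
  obtain ⟨c, hct, hc⟩ := n.primeFactors.finite_toSet.exists_injOn_of_encard_le
    (t := Set.Icc 1 #n.primeFactors) (by simp [← coe_Icc])
  choose σ hσ _ using fun S : Finset ℕ ↦ S.countable_toSet.exists_cycleOn
  choose a ha using fun d ↦ exists_hasLeadingDigits (successorLabel c σ d) d
  refine ⟨a, ?_⟩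
  rintro _ ⟨d, hd, hd1, rfl⟩ _ ⟨d', hd', hd1', rfl⟩ hne ⟨x, hx, hx'⟩
  by_contra hcoprime
  obtain ⟨q, hq, hqd, hqd'⟩ := Nat.Prime.not_coprime_iff_dvd.1 hcoprime
  have hdd' : d = d' := eq_of_hasLeadingDigits_successorLabel hn hcard hfac hc hct hσ hd hd'
    ((ha d).of_modEq hx) ((ha d').of_modEq hx') (hq.mem_primeFactors hqd (by lia))
    (hq.mem_primeFactors hqd' (by lia))
  exact hne (by rw [hdd'])

section ProdPow

variable {ι : Type*} [Fintype ι] {p : ι → ℕ}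

theorem primeFactors_prod_pow_subset (hp : ∀ k, (p k).Prime) (α : ι → ℕ) :
    (∏ k, p k ^ α k).primeFactors ⊆ univ.image p := by
  intro q hq
  have hqp := Nat.prime_of_mem_primeFactors hq
  obtain ⟨k, -, hk⟩ := (hqp.prime.dvd_finsetProd_iff _).1 (Nat.dvd_of_mem_primeFactors hq)
  exact mem_image.2
    ⟨k, mem_univ k, ((Nat.prime_dvd_prime_iff_eq hqp (hp k)).1 (hqp.dvd_of_dvd_pow hk)).symm⟩

theorem factorization_prod_pow (hp : ∀ k, (p k).Prime) (hinj : p.Injective) (α : ι → ℕ) (k : ι) :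
    (∏ i, p i ^ α i).factorization (p k) = α k := by
  rw [Nat.factorization_prod_apply fun i _ ↦ pow_ne_zero _ (hp i).ne_zero,
    sum_eq_single_of_mem k (mem_univ k)]
  · simp [(hp k).factorization_self]
  · intro i _ hik
    simp [(hp i).factorization, hinj.ne hik]

theorem case2_nice_general (hp : ∀ k, (p k).Prime) (hinj : p.Injective) {α : ι → ℕ}
    (hcard : ∀ k, Fintype.card ι ≤ p k) (hα : ∀ k, p k = Fintype.card ι → α k ≤ 1) :
    IsNice (∏ k, p k ^ α k) := by
  set n := ∏ k, p k ^ α k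
  have hsub : n.primeFactors ⊆ univ.image p := primeFactors_prod_pow_subset hp α
  have hle : #n.primeFactors ≤ Fintype.card ι := (card_le_card hsub).trans card_image_le
  refine isNice_of_card_primeFactors_le_s14 (prod_ne_zero_iff.2 fun k _ ↦ pow_ne_zero _ (hp k).ne_zero)
    (fun q hq ↦ ?_) ?_
  · obtain ⟨k, -, rfl⟩ := mem_image.1 (hsub hq)
    exact hle.trans (hcard k)
  · by_cases hmem : #n.primeFactors ∈ n.primeFactors
    · obtain ⟨k, -, hk⟩ := mem_image.1 (hsub hmem)
      rw [← hk, factorization_prod_pow hp hinj]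
      exact hα k ((hk.trans_le hle).antisymm (hcard k))
    · rw [Finsupp.notMem_support_iff.1 hmem]
      exact zero_le_one

end ProdPow

theorem case2_nice (t : ℕ) (ht : 3 ≤ t) (p : Fin t → ℕ) (hp : ∀ k, (p k).Prime)
    (hmono : StrictMono p) (α : Fin t → ℕ) (hα₀ : α ⟨0, by omega⟩ = 1)
    (hα : ∀ k, 1 ≤ α k) (htp : t ≤ p ⟨0, by omega⟩) :
    IsNice (∏ k, p k ^ α k) := by
  have hmin (k : Fin t) : p ⟨0, by omega⟩ ≤ p k := hmono.monotone (Nat.zero_le k)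
  refine case2_nice_general hp hmono.injective (by simpa using fun k ↦ htp.trans (hmin k)) ?_
  intro k hk
  rw [Fintype.card_fin] at hk
  rw [hmono.injective ((hk.trans_le htp).antisymm (hmin k)), hα₀]
end

section
/- The integer n = 3^2 · 5^2 · 7^2 = 11025 is not nice. -/
namespace IsNice

theorem exists_residues_not_modEq_gcd {n : ℕ} (hn : IsNice n) :
    ∃ a : ℕ → ℤ, ∀ d e : ℕ, d ∣ n → e ∣ n → 1 < d → 1 < e → d ≠ e → d.gcd e ≠ 1 →
      ¬ a d ≡ a e [ZMOD (d.gcd e : ℕ)] := by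
  obtain ⟨a, ha⟩ := hn
  refine ⟨a, fun d e hdn hen hd he hne hgcd hmod ↦ hgcd ?_⟩
  exact ha (a d, d) ⟨d, hdn, hd, rfl⟩ (a e, e) ⟨e, hen, he, rfl⟩
    (fun h ↦ hne (congrArg Prod.snd h)) (overlap_iff_modEq_gcd.2 hmod)

theorem card_le_of_pairwise_coprime_s17 {n m : ℕ} (hn : IsNice n) (hm : 1 < m) {T : Finset ℕ}
    (hdiv : ∀ t ∈ T, m * t ∈ n.divisors) (hcop : (T : Set ℕ).Pairwise Nat.Coprime) :
    T.card ≤ m := by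
  obtain ⟨a, ha⟩ := hn.exists_residues_not_modEq_gcd
  have one_lt_mul {t : ℕ} (ht : t ∈ T) : 1 < m * t :=
    one_lt_mul_of_lt_of_le hm
      (Nat.pos_of_mul_pos_left (Nat.pos_of_mem_divisors (hdiv t ht)))
  have injOn_residue : Set.InjOn (fun t ↦ (a (m * t) : ZMod m)) T := by
    intro s hs t ht hst
    by_contra hne
    have hgcd : (m * s).gcd (m * t) = m := by
      rw [Nat.gcd_mul_left, hcop hs ht hne, mul_one]
    refine ha (m * s) (m * t) (Nat.dvd_of_mem_divisors (hdiv s hs))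
      (Nat.dvd_of_mem_divisors (hdiv t ht)) (one_lt_mul hs) (one_lt_mul ht)
      (fun h ↦ hne (Nat.eq_of_mul_eq_mul_left (by lia) h)) (hgcd.trans_ne hm.ne') ?_
    rw [hgcd]
    exact (ZMod.intCast_eq_intCast_iff _ _ _).1 hst
  have : NeZero m := ⟨by lia⟩
  calc T.card ≤ Fintype.card (ZMod m) :=
        Finset.card_le_card_of_injOn _ (fun _ _ ↦ Finset.mem_univ _) injOn_residue
    _ = m := ZMod.card m

end IsNice

theorem not_nice_11025_general {n m : ℕ} (hm : 1 < m)
    (hcard : m ≤ (n.primeFactors.filter fun q ↦ m * q ∣ n).card) : ¬ IsNice n := by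
  intro hn
  set Q := n.primeFactors.filter fun q ↦ m * q ∣ n
  have prime_of_mem {q : ℕ} (hq : q ∈ Q) : q.Prime :=
    Nat.prime_of_mem_primeFactors (Finset.mem_filter.1 hq).1
  obtain ⟨q₀, hq₀⟩ : Q.Nonempty := Finset.card_pos.1 (by lia)
  have n_ne_zero : n ≠ 0 := (Nat.mem_primeFactors.1 (Finset.mem_filter.1 hq₀).1).2.2
  have mul_dvd : ∀ t ∈ insert 1 Q, m * t ∣ n := by
    refine (Finset.forall_mem_insert _ _ _).2 ⟨?_, fun q hq ↦ (Finset.mem_filter.1 hq).2⟩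
    exact (mul_dvd_mul_left m (one_dvd q₀)).trans (Finset.mem_filter.1 hq₀).2
  have coprime : ((insert 1 Q : Finset ℕ) : Set ℕ).Pairwise Nat.Coprime := by
    rw [Finset.coe_insert, Set.pairwise_insert_of_symm]
    exact ⟨fun p hp q hq ↦ (Nat.coprime_primes (prime_of_mem hp) (prime_of_mem hq)).2,
      fun q _ _ ↦ Nat.coprime_one_left q⟩
  have card_insert : (insert 1 Q).card = Q.card + 1 :=
    Finset.card_insert_of_notMem fun h ↦ Nat.not_prime_one (prime_of_mem h)
  have card_le : (insert 1 Q).card ≤ m := hn.card_le_of_pairwise_coprime_s17 hm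
    (fun t ht ↦ Nat.mem_divisors.2 ⟨mul_dvd t ht, n_ne_zero⟩) coprime
  lia

theorem not_nice_11025 : ¬ IsNice 11025 := by
  have : ({3, 5, 7} : Finset ℕ) ⊆ (Nat.primeFactors 11025).filter fun q ↦ 3 * q ∣ 11025 := by
    norm_num [Finset.insert_subset_iff]
  exact not_nice_11025_general (m := 3) (by norm_num) (Finset.card_le_card this)
end
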